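/- arXiv:2312.16456 — 2 statements merged into one kernel-verified Lean document; each statement's English description precedes it below -/
import Mathlib

section
/- Let S and A be nonempty finite types, P : S → A → PMF S a transition kernel, ρ0 a probability distribution on S, and γ ∈ [0,1). Let π and π' be policies, let σ ≥ 0, let R_e : S × A → ℝ be a reward function, g : S × A → ℝ any function and δ ∈ ℝ, and set R(s,a) = R_e(s,a) + σ · min{g(s,a) − δ, 0}. Let A^π_R(s,a) = Q^π_R(s,a) − V^π_R(s) be the advantage function of π computed with the total reward R, and set ε^{π'} = max_s |Σ_a π'(a|s) A^π_R(s,a)|. Then J_R(π') − J_R(π) ≥ (1/(1−γ)) · Σ_s d^π(s) Σ_a π'(a|s) [A^π_R(s,a) − (2γ ε^{π'}/(1−γ)) D_TV(π'‖π)[s]]. -/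
open scoped BigOperators

section MDPdefs

variable {S A : Type*} [Fintype S] [Fintype A]

/-- The state-marginal distribution at time `t` under policy `π`:
`ρ_0 = ρ0` and `ρ_{t+1}(s') = ∑_s ∑_a ρ_t(s) π(a|s) P(s'|s,a)`. -/
noncomputable def stateMarginal (P : S → A → PMF S) (ρ0 : PMF S) (π : S → PMF A) :
    ℕ → S → ℝ
  | 0, s => (ρ0 s).toReal
  | t + 1, s' => ∑ s : S, ∑ a : A,
      stateMarginal P ρ0 π t s * (π s a).toReal * (P s a s').toReal

/-- The discounted state visitation distribution `d^π(s) = (1-γ) ∑_t γ^t ρ_t^π(s)`. -/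
noncomputable def dVisit (P : S → A → PMF S) (ρ0 : PMF S) (γ : ℝ) (π : S → PMF A)
    (s : S) : ℝ :=
  (1 - γ) * ∑' t : ℕ, γ ^ t * stateMarginal P ρ0 π t s

/-- The discounted return `J_R(π) = ∑_t γ^t ∑_s ∑_a ρ_t^π(s) π(a|s) R(s,a)`. -/
noncomputable def Jret (P : S → A → PMF S) (ρ0 : PMF S) (γ : ℝ) (π : S → PMF A)
    (R : S → A → ℝ) : ℝ :=
  ∑' t : ℕ, γ ^ t * ∑ s : S, ∑ a : A,
      stateMarginal P ρ0 π t s * (π s a).toReal * R s a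

/-- Total variational divergence between the action distributions of two policies at `s`. -/
noncomputable def dTV (π' π : S → PMF A) (s : S) : ℝ :=
  (1 / 2) * ∑ a : A, |(π' s a).toReal - (π s a).toReal|

/-- Value function of `π` with reward `R`: expected discounted return started at `s`. -/
noncomputable def Vval (P : S → A → PMF S) (γ : ℝ) (π : S → PMF A) (R : S → A → ℝ)
    (s : S) : ℝ :=
  Jret P (PMF.pure s) γ π R

/-- State-action value function `Q^π_R(s,a) = R(s,a) + γ ∑_{s'} P(s'|s,a) V^π_R(s')`. -/
noncomputable def Qval (P : S → A → PMF S) (γ : ℝ) (π : S → PMF A) (R : S → A → ℝ)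
    (s : S) (a : A) : ℝ :=
  R s a + γ * ∑ s' : S, (P s a s').toReal * Vval P γ π R s'

/-- Advantage function `A^π_R(s,a) = Q^π_R(s,a) - V^π_R(s)`. -/
noncomputable def Aadv (P : S → A → PMF S) (γ : ℝ) (π : S → PMF A) (R : S → A → ℝ)
    (s : S) (a : A) : ℝ :=
  Qval P γ π R s a - Vval P γ π R s

/-- Kullback–Leibler divergence between the action distributions at state `s`. -/
noncomputable def dKL (π' π : S → PMF A) (s : S) : ℝ :=
  ∑ a : A, (π' s a).toReal * Real.log ((π' s a).toReal / (π s a).toReal)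

end MDPdefs

/-!
The visitation distribution is the solution of the flow equation `d = (1 - γ) ρ₀ + γ d T`, where `T`
is the state-to-state kernel of the policy. Pairing the flow equation of `π'` with `V^π` telescopes
`d^{π'} · (R + γ T V^π - V^π)` into the performance difference, which gives the identity
`J(π') - J(π) = (1 - γ)⁻¹ d^{π'} · 𝔼_{π'} A^π`. Subtracting the flow equations of the two policies,
and using that a stochastic kernel contracts the `ℓ¹` norm, gives
`‖d^{π'} - d^π‖₁ ≤ 2γ/(1 - γ) d^π · D_TV`, so replacing `d^{π'}` by `d^π` in the identity costs at
most `(1 - γ)⁻¹ ε` times this.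
-/

open Matrix

section FlowEquation

variable {n : Type*} [Fintype n]

lemma abs_dotProduct_le (v w : n → ℝ) : |v ⬝ᵥ w| ≤ ∑ i, |v i| * |w i| := by
  simp only [← abs_mul]
  exact Finset.abs_sum_le_sum_abs _ _

lemma sum_abs_vecMul_le {m : Type*} [Fintype m] (v : m → ℝ) (M : Matrix m n ℝ) :
    ∑ j, |(v ᵥ* M) j| ≤ ∑ i, |v i| * ∑ j, |M i j| := by
  calc ∑ j, |(v ᵥ* M) j| ≤ ∑ j, ∑ i, |v i| * |M i j| :=
        Finset.sum_le_sum fun j _ => abs_dotProduct_le v fun i => M i j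
    _ = ∑ i, |v i| * ∑ j, |M i j| := by
        rw [Finset.sum_comm]
        simp only [Finset.mul_sum]

lemma sum_abs_vecMul_le_of_mem_rowStochastic [DecidableEq n] {M : Matrix n n ℝ}
    (hM : M ∈ rowStochastic ℝ n) (v : n → ℝ) : ∑ j, |(v ᵥ* M) j| ≤ ∑ i, |v i| := by
  have row_sum (i : n) : ∑ j, |M i j| = 1 := by
    simp only [abs_of_nonneg (nonneg_of_mem_rowStochastic hM), sum_row_of_mem_rowStochastic hM]
  simpa only [row_sum, mul_one] using sum_abs_vecMul_le v M

lemma sum_abs_sub_le_of_flow_eq [DecidableEq n] {γ : ℝ} (hγ : 0 ≤ γ) {ν x y : n → ℝ}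
    {M N : Matrix n n ℝ} (hM : M ∈ rowStochastic ℝ n) (hx : x = ν + γ • (x ᵥ* M))
    (hy : y = ν + γ • (y ᵥ* N)) :
    (1 - γ) * ∑ i, |x i - y i| ≤ γ * ∑ i, |y i| * ∑ j, |M i j - N i j| := by
  have sub_eq : x - y = γ • ((x - y) ᵥ* M + y ᵥ* (M - N)) := by
    nth_rewrite 1 [hx, hy]
    simp only [sub_vecMul, vecMul_sub, sub_add_sub_cancel, smul_sub, add_sub_add_left_eq_sub]
  have sum_abs_sub_le : ∑ i, |x i - y i| ≤
      γ * (∑ i, |x i - y i| + ∑ i, |y i| * ∑ j, |M i j - N i j|) := by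
    calc ∑ i, |x i - y i| = ∑ i, γ * |((x - y) ᵥ* M) i + (y ᵥ* (M - N)) i| := by
          refine Finset.sum_congr rfl fun i _ => ?_
          have sub_apply_eq : x i - y i = γ * (((x - y) ᵥ* M) i + (y ᵥ* (M - N)) i) :=
            congrFun sub_eq i
          rw [sub_apply_eq, abs_mul, abs_of_nonneg hγ]
      _ ≤ γ * (∑ i, |((x - y) ᵥ* M) i| + ∑ i, |(y ᵥ* (M - N)) i|) := by
          rw [← Finset.mul_sum, ← Finset.sum_add_distrib]
          gcongr
          exact abs_add_le _ _
      _ ≤ γ * (∑ i, |x i - y i| + ∑ i, |y i| * ∑ j, |M i j - N i j|) := by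
          refine mul_le_mul_of_nonneg_left (add_le_add ?_ ?_) hγ
          · exact sum_abs_vecMul_le_of_mem_rowStochastic hM (x - y)
          · exact sum_abs_vecMul_le y (M - N)
  linarith

lemma dotProduct_add_smul_mulVec_sub_of_flow_eq {α : Type*} [CommRing α] {γ : α} {ν x : n → α}
    {M : Matrix n n α} (hx : x = ν + γ • (x ᵥ* M)) (r V : n → α) :
    x ⬝ᵥ (r + γ • (M *ᵥ V) - V) = x ⬝ᵥ r - ν ⬝ᵥ V := by
  have pair_flow : x ⬝ᵥ V = ν ⬝ᵥ V + γ * (x ⬝ᵥ M *ᵥ V) := by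
    conv_lhs => rw [hx]
    rw [add_dotProduct, smul_dotProduct, dotProduct_mulVec, smul_eq_mul]
  rw [dotProduct_sub, dotProduct_add, dotProduct_smul, smul_eq_mul, pair_flow]
  ring

lemma abs_dotProduct_le_sum_abs_mul {x f : n → ℝ} {ε : ℝ} (hf : ∀ i, |f i| ≤ ε) :
    |x ⬝ᵥ f| ≤ (∑ i, |x i|) * ε := by
  calc |x ⬝ᵥ f| ≤ ∑ i, |x i| * |f i| := abs_dotProduct_le x f
    _ ≤ (∑ i, |x i|) * ε := by
        rw [Finset.sum_mul]
        gcongr with i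
        exact hf i

end FlowEquation

lemma sum_toReal_pmf {α : Type*} [Fintype α] (p : PMF α) : ∑ a, (p a).toReal = 1 := by
  rw [← ENNReal.toReal_sum fun a _ => p.apply_ne_top a, ← tsum_fintype (L := .unconditional α),
    p.tsum_coe, ENNReal.toReal_one]

section Policy

variable {S A : Type*} [Fintype A]

/-- The expectation `𝔼_{a ∼ π(·|s)} f(s, a)`, as a function of the state `s`. -/
noncomputable def policyMean (π : S → PMF A) (f : S → A → ℝ) (s : S) : ℝ :=
  ∑ a, (π s a).toReal * f s a

/-- The kernel `T(s, s') = ∑_a π(a|s) P(s'|s,a)` of the Markov chain on states induced by `π`, as a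
matrix whose rows are the outgoing distributions, so that distributions over states are row
vectors and value functions are column vectors. -/
noncomputable def policyTransition (P : S → A → PMF S) (π : S → PMF A) : Matrix S S ℝ :=
  fun s s' => policyMean π (fun s a => (P s a s').toReal) s

variable [Fintype S] (P : S → A → PMF S) (ρ0 : PMF S) (π π' : S → PMF A)

lemma policyTransition_mem_rowStochastic [DecidableEq S] :
    policyTransition P π ∈ rowStochastic ℝ S := by
  refine mem_rowStochastic_iff_sum.2 ⟨fun s s' => Finset.sum_nonneg fun a _ => by positivity,
    fun s => ?_⟩
  simp only [policyTransition, policyMean]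
  rw [Finset.sum_comm]
  simp only [← Finset.mul_sum, sum_toReal_pmf, mul_one]

lemma sum_abs_policyTransition_sub_le (s : S) :
    ∑ s', |policyTransition P π' s s' - policyTransition P π s s'| ≤ 2 * dTV π' π s := by
  have sub_eq (s' : S) : policyTransition P π' s s' - policyTransition P π s s' =
      ∑ a, ((π' s a).toReal - (π s a).toReal) * (P s a s').toReal := by
    simp only [policyTransition, policyMean, sub_mul, Finset.sum_sub_distrib]
  calc ∑ s', |policyTransition P π' s s' - policyTransition P π s s'|
      ≤ ∑ s', ∑ a, |(π' s a).toReal - (π s a).toReal| * (P s a s').toReal := by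
        gcongr with s'
        rw [sub_eq]
        refine (Finset.abs_sum_le_sum_abs _ _).trans_eq ?_
        simp only [abs_mul, ENNReal.abs_toReal]
    _ = ∑ a, |(π' s a).toReal - (π s a).toReal| := by
        rw [Finset.sum_comm]
        simp only [← Finset.mul_sum, sum_toReal_pmf, mul_one]
    _ = 2 * dTV π' π s := by
        rw [dTV]
        ring

lemma policyMean_Aadv (γ : ℝ) (R : S → A → ℝ) :
    policyMean π' (Aadv P γ π R) =
      policyMean π' R + γ • (policyTransition P π' *ᵥ Vval P γ π R) - Vval P γ π R := by
  have mean_next_value (s : S) :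
      ∑ a, (π' s a).toReal * (γ * ∑ s', (P s a s').toReal * Vval P γ π R s') =
        γ * (policyTransition P π' *ᵥ Vval P γ π R) s := by
    simp only [mulVec, dotProduct, policyTransition, policyMean, Finset.sum_mul, Finset.mul_sum]
    rw [Finset.sum_comm]
    exact Finset.sum_congr rfl fun s' _ => Finset.sum_congr rfl fun a _ => by ring
  ext s
  simp only [policyMean, Aadv, Qval, mul_sub, mul_add, Finset.sum_sub_distrib,
    Finset.sum_add_distrib, ← Finset.sum_mul, sum_toReal_pmf, one_mul, mean_next_value,
    Pi.sub_apply, Pi.add_apply, Pi.smul_apply, smul_eq_mul]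

lemma stateMarginal_zero : stateMarginal P ρ0 π 0 = fun s => (ρ0 s).toReal := rfl

lemma stateMarginal_succ (t : ℕ) :
    stateMarginal P ρ0 π (t + 1) = stateMarginal P ρ0 π t ᵥ* policyTransition P π := by
  ext s'
  simp only [stateMarginal, vecMul, dotProduct, policyTransition, policyMean, Finset.mul_sum,
    mul_assoc]

lemma stateMarginal_mem_stdSimplex (t : ℕ) : stateMarginal P ρ0 π t ∈ stdSimplex ℝ S := by
  classical
  induction t with
  | zero => exact ⟨fun s => ENNReal.toReal_nonneg, sum_toReal_pmf ρ0⟩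
  | succ t ih =>
    have hT := policyTransition_mem_rowStochastic P π
    rw [stateMarginal_succ]
    refine ⟨nonneg_vecMul_of_mem_rowStochastic hT ih.1, ?_⟩
    rw [← dotProduct_one]
    exact vecMul_dotProduct_one_eq_one_rowStochastic hT (by rw [dotProduct_one, ih.2])

lemma stateMarginal_eq_sum_pure (t : ℕ) :
    stateMarginal P ρ0 π t = ∑ i, (ρ0 i).toReal • stateMarginal P (PMF.pure i) π t := by
  classical
  induction t with
  | zero =>
    ext s
    simp [stateMarginal_zero, PMF.pure_apply, apply_ite ENNReal.toReal]
  | succ t ih => simp only [stateMarginal_succ, ih, sum_vecMul, smul_vecMul]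

end Policy

section DiscountedVisitation

variable {S A : Type*} [Fintype S] [Fintype A] (P : S → A → PMF S) (ρ0 : PMF S)
  (π π' : S → PMF A) {γ : ℝ} (hγ0 : 0 ≤ γ) (hγ1 : γ < 1)
include hγ0 hγ1

lemma dVisit_nonneg (s : S) : 0 ≤ dVisit P ρ0 γ π s :=
  mul_nonneg (sub_nonneg.2 hγ1.le) <| tsum_nonneg fun t =>
    mul_nonneg (pow_nonneg hγ0 t) ((stateMarginal_mem_stdSimplex P ρ0 π t).1 s)

lemma hasSum_pow_mul_stateMarginal (s : S) :
    HasSum (fun t => γ ^ t * stateMarginal P ρ0 π t s) ((1 - γ)⁻¹ * dVisit P ρ0 γ π s) := by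
  have summable : Summable fun t => γ ^ t * stateMarginal P ρ0 π t s := by
    refine .of_nonneg_of_le (fun t => ?_) (fun t => ?_) (summable_geometric_of_lt_one hγ0 hγ1)
    · exact mul_nonneg (pow_nonneg hγ0 t) ((stateMarginal_mem_stdSimplex P ρ0 π t).1 s)
    · exact mul_le_of_le_one_right (pow_nonneg hγ0 t)
        (mem_Icc_of_mem_stdSimplex (stateMarginal_mem_stdSimplex P ρ0 π t) s).2
  rw [dVisit, inv_mul_cancel_left₀ (sub_pos.2 hγ1).ne']
  exact summable.hasSum

lemma hasSum_pow_mul_stateMarginal_dotProduct (f : S → ℝ) :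
    HasSum (fun t => γ ^ t * (stateMarginal P ρ0 π t ⬝ᵥ f))
      ((1 - γ)⁻¹ * (dVisit P ρ0 γ π ⬝ᵥ f)) := by
  simp only [dotProduct, Finset.mul_sum, ← mul_assoc]
  exact hasSum_sum fun s _ => (hasSum_pow_mul_stateMarginal P ρ0 π hγ0 hγ1 s).mul_right (f s)

lemma dVisit_flow_eq :
    dVisit P ρ0 γ π = (1 - γ) • (fun s => (ρ0 s).toReal) +
      γ • (dVisit P ρ0 γ π ᵥ* policyTransition P π) := by
  ext s'
  have shifted : HasSum (fun t => γ ^ (t + 1) * stateMarginal P ρ0 π (t + 1) s')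
      (γ * ((1 - γ)⁻¹ * (dVisit P ρ0 γ π ᵥ* policyTransition P π) s')) := by
    simp only [stateMarginal_succ, pow_succ', mul_assoc]
    exact (hasSum_pow_mul_stateMarginal_dotProduct P ρ0 π hγ0 hγ1 _).mul_left γ
  have split_first : (1 - γ)⁻¹ * dVisit P ρ0 γ π s' = (ρ0 s').toReal +
      γ * ((1 - γ)⁻¹ * (dVisit P ρ0 γ π ᵥ* policyTransition P π) s') := by
    refine (hasSum_pow_mul_stateMarginal P ρ0 π hγ0 hγ1 s').unique ?_
    simpa only [pow_zero, one_mul, stateMarginal_zero] using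
      HasSum.zero_add (f := fun t => γ ^ t * stateMarginal P ρ0 π t s') shifted
  rw [inv_mul_eq_iff_eq_mul₀ (sub_pos.2 hγ1).ne'] at split_first
  rw [split_first, mul_add, mul_left_comm, mul_inv_cancel_left₀ (sub_pos.2 hγ1).ne']
  rfl

lemma sum_abs_dVisit_sub_le :
    (1 - γ) * ∑ s, |dVisit P ρ0 γ π' s - dVisit P ρ0 γ π s| ≤
      2 * γ * (dVisit P ρ0 γ π ⬝ᵥ dTV π' π) := by
  classical
  refine (sum_abs_sub_le_of_flow_eq hγ0 (policyTransition_mem_rowStochastic P π')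
    (dVisit_flow_eq P ρ0 π' hγ0 hγ1) (dVisit_flow_eq P ρ0 π hγ0 hγ1)).trans ?_
  rw [mul_comm 2 γ, mul_assoc, dotProduct, Finset.mul_sum Finset.univ _ 2]
  refine mul_le_mul_of_nonneg_left (Finset.sum_le_sum fun s _ => ?_) hγ0
  have d_nonneg : 0 ≤ dVisit P ρ0 γ π s := dVisit_nonneg P ρ0 π hγ0 hγ1 s
  rw [abs_of_nonneg d_nonneg, mul_left_comm]
  exact mul_le_mul_of_nonneg_left (sum_abs_policyTransition_sub_le P π π' s) d_nonneg

lemma hasSum_Jret (R : S → A → ℝ) :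
    HasSum (fun t => γ ^ t * (stateMarginal P ρ0 π t ⬝ᵥ policyMean π R)) (Jret P ρ0 γ π R) := by
  simpa only [Jret, dotProduct, policyMean, Finset.mul_sum, mul_assoc] using
    (hasSum_pow_mul_stateMarginal_dotProduct P ρ0 π hγ0 hγ1 (policyMean π R)).summable.hasSum

lemma Jret_eq_dVisit_dotProduct (R : S → A → ℝ) :
    Jret P ρ0 γ π R = (1 - γ)⁻¹ * (dVisit P ρ0 γ π ⬝ᵥ policyMean π R) :=
  (hasSum_Jret P ρ0 π hγ0 hγ1 R).unique
    (hasSum_pow_mul_stateMarginal_dotProduct P ρ0 π hγ0 hγ1 _)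

lemma Jret_eq_dotProduct_Vval (R : S → A → ℝ) :
    Jret P ρ0 γ π R = (fun s => (ρ0 s).toReal) ⬝ᵥ Vval P γ π R := by
  refine (hasSum_Jret P ρ0 π hγ0 hγ1 R).unique ?_
  simp only [stateMarginal_eq_sum_pure P ρ0 π, sum_dotProduct, smul_dotProduct, smul_eq_mul,
    Finset.mul_sum, mul_left_comm (γ ^ _)]
  exact hasSum_sum fun s _ => (hasSum_Jret P (PMF.pure s) π hγ0 hγ1 R).mul_left _

theorem Jret_sub_eq_dVisit_dotProduct (R : S → A → ℝ) :
    Jret P ρ0 γ π' R - Jret P ρ0 γ π R =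
      (1 - γ)⁻¹ * (dVisit P ρ0 γ π' ⬝ᵥ policyMean π' (Aadv P γ π R)) := by
  rw [policyMean_Aadv,
    dotProduct_add_smul_mulVec_sub_of_flow_eq (dVisit_flow_eq P ρ0 π' hγ0 hγ1),
    smul_dotProduct, smul_eq_mul, ← Jret_eq_dotProduct_Vval P ρ0 π hγ0 hγ1, mul_sub,
    ← Jret_eq_dVisit_dotProduct P ρ0 π' hγ0 hγ1, inv_mul_cancel_left₀ (sub_pos.2 hγ1).ne']

lemma dVisit_dotProduct_sub_le {f : S → ℝ} {ε : ℝ} (hf : ∀ s, |f s| ≤ ε) :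
    dVisit P ρ0 γ π ⬝ᵥ f - 2 * γ * ε / (1 - γ) * (dVisit P ρ0 γ π ⬝ᵥ dTV π' π) ≤
      dVisit P ρ0 γ π' ⬝ᵥ f := by
  obtain ⟨s, -⟩ := ρ0.support_nonempty
  have ε_nonneg : 0 ≤ ε := (abs_nonneg _).trans (hf s)
  have l1_dist_le : ∑ s, |dVisit P ρ0 γ π' s - dVisit P ρ0 γ π s| ≤
      2 * γ * (dVisit P ρ0 γ π ⬝ᵥ dTV π' π) / (1 - γ) := by
    rw [le_div_iff₀' (sub_pos.2 hγ1)]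
    exact sum_abs_dVisit_sub_le P ρ0 π π' hγ0 hγ1
  have change_le : |(dVisit P ρ0 γ π' - dVisit P ρ0 γ π) ⬝ᵥ f| ≤
      2 * γ * ε / (1 - γ) * (dVisit P ρ0 γ π ⬝ᵥ dTV π' π) :=
    calc _ ≤ (∑ s, |dVisit P ρ0 γ π' s - dVisit P ρ0 γ π s|) * ε := abs_dotProduct_le_sum_abs_mul hf
      _ ≤ 2 * γ * (dVisit P ρ0 γ π ⬝ᵥ dTV π' π) / (1 - γ) * ε := by gcongr
      _ = _ := by ring
  rw [sub_dotProduct] at change_le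
  linarith [neg_abs_le (dVisit P ρ0 γ π' ⬝ᵥ f - dVisit P ρ0 γ π ⬝ᵥ f)]

theorem tace_corollary_one_general (R : S → A → ℝ) {ε : ℝ}
    (hε : ∀ s, |∑ a, (π' s a).toReal * Aadv P γ π R s a| ≤ ε) :
    Jret P ρ0 γ π' R - Jret P ρ0 γ π R ≥
      (1 / (1 - γ)) * ∑ s, dVisit P ρ0 γ π s * ∑ a, (π' s a).toReal *
        (Aadv P γ π R s a - (2 * γ * ε / (1 - γ)) * dTV π' π s) := by
  have penalized_mean : ∑ s, dVisit P ρ0 γ π s * ∑ a, (π' s a).toReal *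
        (Aadv P γ π R s a - (2 * γ * ε / (1 - γ)) * dTV π' π s) =
      dVisit P ρ0 γ π ⬝ᵥ policyMean π' (Aadv P γ π R) -
        2 * γ * ε / (1 - γ) * (dVisit P ρ0 γ π ⬝ᵥ dTV π' π) := by
    rw [← smul_eq_mul (2 * γ * ε / (1 - γ)), ← dotProduct_smul, ← dotProduct_sub]
    simp only [dotProduct, policyMean, mul_sub, Finset.sum_sub_distrib, ← Finset.sum_mul,
      sum_toReal_pmf, one_mul, Pi.sub_apply, Pi.smul_apply, smul_eq_mul]
  rw [penalized_mean, Jret_sub_eq_dVisit_dotProduct P ρ0 π π' hγ0 hγ1 R, one_div]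
  exact mul_le_mul_of_nonneg_left (dVisit_dotProduct_sub_le P ρ0 π π' hγ0 hγ1 hε)
    (inv_nonneg.2 (sub_nonneg.2 hγ1.le))

end DiscountedVisitation

/-- Corollary 1: worst-case approximation error bound in terms of the advantage
function computed with the total reward `R = R_e + σ·min{g - δ, 0}`. -/
theorem tace_corollary_one
    {S A : Type*} [Fintype S] [Fintype A] [Nonempty S] [Nonempty A]
    (P : S → A → PMF S) (ρ0 : PMF S) (γ : ℝ) (hγ0 : 0 ≤ γ) (hγ1 : γ < 1)
    (π π' : S → PMF A) (σ : ℝ) (hσ : 0 ≤ σ) (Re g : S → A → ℝ) (δ : ℝ) :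
    let R : S → A → ℝ := fun s a => Re s a + σ * min (g s a - δ) 0
    let ε : ℝ := ⨆ s : S, |∑ a : A, (π' s a).toReal * Aadv P γ π R s a|
    Jret P ρ0 γ π' R - Jret P ρ0 γ π R ≥
      (1 / (1 - γ)) * ∑ s : S, dVisit P ρ0 γ π s * ∑ a : A, (π' s a).toReal *
        (Aadv P γ π R s a - (2 * γ * ε / (1 - γ)) * dTV π' π s) := by
  intro R ε
  exact tace_corollary_one_general P ρ0 π π' hγ0 hγ1 R (le_ciSup (Set.finite_range _).bddAbove)
end

section
/- Let S and A be nonempty finite types, P : S → A → PMF S a transition kernel, ρ0 a probability distribution on S, and γ ∈ [0,1). Let R : S × A → ℝ be a reward function, π and π' policies with π(a|s) > 0 for all s, a, and f : S → ℝ any function. Define T_{π,f}(π') = Σ_s d^π(s) Σ_a π(a|s) Σ_{s'} P(s'|s,a) (π'(a|s)/π(a|s) − 1)(R(s,a) + γ f(s') − f(s)) and ε_f^{π'} = max_s |Σ_a π'(a|s) Σ_{s'} P(s'|s,a) (R(s,a) + γ f(s') − f(s))|. Then J_R(π') − J_R(π) ≤ (1/(1−γ)) (T_{π,f}(π') + 2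 ε_f^{π'} D_TV(d^{π'}‖d^π)), where D_TV(d^{π'}‖d^π) = (1/2) Σ_s |d^{π'}(s) − d^π(s)|. -/
open scoped BigOperators

/-!
Write `δ^π(s)` for the mean temporal-difference error of the potential `f` at `s`. Under the
time-`t` state marginal, `δ^π` averages to the expected reward plus `γ E[f(s_{t+1})] - E[f(s_t)]`,
so its discounted sum over `t` telescopes to `J_R(π) - E_{ρ0}[f]`. The potential term does not
depend on the policy, hence
`(1 - γ) (J_R(π') - J_R(π)) = ∑ d^{π'} δ^{π'} - ∑ d^π δ^π
  = ∑ d^π (δ^{π'} - δ^π) + ∑ (d^{π'} - d^π) δ^{π'}`.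
The first sum is `T_{π,f}(π')` by importance sampling; Hölder's inequality bounds the second.
-/

section FiniteSums

variable {ι : Type*} [Fintype ι]

lemma pmf_sum_toReal (p : PMF ι) : ∑ i, (p i).toReal = 1 := by
  rw [← ENNReal.toReal_sum fun i _ ↦ p.apply_ne_top i, ← tsum_fintype (L := .unconditional ι),
    p.tsum_coe, ENNReal.toReal_one]

lemma sum_mul_le_iSup_abs_mul_sum_abs (u g : ι → ℝ) :
    ∑ i, u i * g i ≤ (⨆ i, |g i|) * ∑ i, |u i| := by
  rw [Finset.mul_sum]
  refine Finset.sum_le_sum fun i _ ↦ ?_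
  calc u i * g i ≤ |g i| * |u i| := by rw [mul_comm, ← abs_mul]; exact le_abs_self _
    _ ≤ (⨆ j, |g j|) * |u i| := by
      gcongr
      exact le_ciSup (Set.finite_range fun j ↦ |g j|).bddAbove i

end FiniteSums

section StateMarginal

variable {S A : Type*} [Fintype S] [Fintype A]
  (P : S → A → PMF S) (ρ0 : PMF S) (π : S → PMF A)

lemma stateMarginal_nonneg (t : ℕ) (s : S) : 0 ≤ stateMarginal P ρ0 π t s := by
  cases t with
  | zero => exact ENNReal.toReal_nonneg
  | succ t =>
    refine Finset.sum_nonneg fun x _ ↦ Finset.sum_nonneg fun a _ ↦ ?_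
    have := stateMarginal_nonneg t x
    positivity

lemma sum_stateMarginal_succ_mul (t : ℕ) (g : S → ℝ) :
    ∑ s, stateMarginal P ρ0 π (t + 1) s * g s =
      ∑ s, stateMarginal P ρ0 π t s *
        ∑ a, (π s a).toReal * ∑ s', (P s a s').toReal * g s' := by
  simp only [stateMarginal, Finset.sum_mul, Finset.mul_sum, mul_assoc]
  rw [Finset.sum_comm]
  exact Finset.sum_congr rfl fun s _ ↦ Finset.sum_comm

lemma sum_stateMarginal (t : ℕ) : ∑ s, stateMarginal P ρ0 π t s = 1 := by
  induction t with
  | zero => exact pmf_sum_toReal ρ0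
  | succ t ih => simpa [pmf_sum_toReal, ih] using sum_stateMarginal_succ_mul P ρ0 π t 1

lemma stateMarginal_le_one (t : ℕ) (s : S) : stateMarginal P ρ0 π t s ≤ 1 :=
  sum_stateMarginal P ρ0 π t ▸
    Finset.single_le_sum (fun x _ ↦ stateMarginal_nonneg P ρ0 π t x) (Finset.mem_univ s)

variable {γ : ℝ}

lemma summable_pow_mul_stateMarginal (hγ : |γ| < 1) (s : S) :
    Summable fun t : ℕ ↦ γ ^ t * stateMarginal P ρ0 π t s := by
  refine .of_norm_bounded (summable_geometric_of_lt_one (abs_nonneg γ) hγ) fun t ↦ ?_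
  rw [Real.norm_eq_abs, abs_mul, abs_pow, abs_of_nonneg (stateMarginal_nonneg P ρ0 π t s)]
  exact mul_le_of_le_one_right (by positivity) (stateMarginal_le_one P ρ0 π t s)

lemma hasSum_pow_mul_sum_stateMarginal_mul (hγ : |γ| < 1) (g : S → ℝ) :
    HasSum (fun t : ℕ ↦ γ ^ t * ∑ s, stateMarginal P ρ0 π t s * g s)
      (∑ s, (∑' t : ℕ, γ ^ t * stateMarginal P ρ0 π t s) * g s) := by
  simp only [Finset.mul_sum, ← mul_assoc]
  exact hasSum_sum fun s _ ↦ (summable_pow_mul_stateMarginal P ρ0 π hγ s).hasSum.mul_right (g s)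

lemma sum_dVisit_mul (hγ : |γ| < 1) (g : S → ℝ) :
    ∑ s, dVisit P ρ0 γ π s * g s =
      (1 - γ) * ∑' t : ℕ, γ ^ t * ∑ s, stateMarginal P ρ0 π t s * g s := by
  rw [(hasSum_pow_mul_sum_stateMarginal_mul P ρ0 π hγ g).tsum_eq]
  simp only [dVisit, mul_assoc, Finset.mul_sum]

end StateMarginal

section TemporalDifference

variable {S A : Type*} [Fintype S] [Fintype A]

/-- The mean temporal-difference error `δ^π(s)` of the potential `f` at `s` under the policy `π`;
`ε_f^π` is the maximum over `s` of its absolute value. -/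
noncomputable def meanTDError (P : S → A → PMF S) (γ : ℝ) (π : S → PMF A) (R : S → A → ℝ)
    (f : S → ℝ) (s : S) : ℝ :=
  ∑ a, (π s a).toReal * ∑ s', (P s a s').toReal * (R s a + γ * f s' - f s)

variable (P : S → A → PMF S) (ρ0 : PMF S) {γ : ℝ} (R : S → A → ℝ) (f : S → ℝ)

lemma meanTDError_eq (γ : ℝ) (π : S → PMF A) (s : S) :
    meanTDError P γ π R f s = ∑ a, (π s a).toReal * R s a +
      γ * ∑ a, (π s a).toReal * ∑ s', (P s a s').toReal * f s' - f s := by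
  simp only [meanTDError, mul_sub, mul_add, Finset.sum_sub_distrib,
    Finset.sum_add_distrib, ← Finset.sum_mul, pmf_sum_toReal, one_mul, mul_left_comm _ γ,
    ← Finset.mul_sum]

lemma sum_stateMarginal_mul_meanTDError (γ : ℝ) (π : S → PMF A) (t : ℕ) :
    ∑ s, stateMarginal P ρ0 π t s * meanTDError P γ π R f s =
      ∑ s, stateMarginal P ρ0 π t s * ∑ a, (π s a).toReal * R s a +
        γ * ∑ s, stateMarginal P ρ0 π (t + 1) s * f s - ∑ s, stateMarginal P ρ0 π t s * f s := by
  simp only [meanTDError_eq, sum_stateMarginal_succ_mul, mul_sub, mul_add,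
    Finset.sum_sub_distrib, Finset.sum_add_distrib, mul_left_comm _ γ, ← Finset.mul_sum]

lemma sum_dVisit_mul_meanTDError (hγ : |γ| < 1) (π : S → PMF A) :
    ∑ s, dVisit P ρ0 γ π s * meanTDError P γ π R f s =
      (1 - γ) * (Jret P ρ0 γ π R - ∑ s, (ρ0 s).toReal * f s) := by
  have return_hasSum := (hasSum_pow_mul_sum_stateMarginal_mul P ρ0 π hγ
    fun s ↦ ∑ a, (π s a).toReal * R s a).summable.hasSum
  have potential_hasSum := (hasSum_pow_mul_sum_stateMarginal_mul P ρ0 π hγ f).summable.hasSum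
  have shifted_hasSum := (hasSum_nat_add_iff' 1).mpr potential_hasSum
  have td_hasSum := (return_hasSum.add shifted_hasSum).sub potential_hasSum
  have td_tsum : ∑' t : ℕ, γ ^ t * ∑ s, stateMarginal P ρ0 π t s * meanTDError P γ π R f s =
      Jret P ρ0 γ π R - ∑ s, (ρ0 s).toReal * f s := by
    convert td_hasSum.tsum_eq using 1
    · refine tsum_congr fun t ↦ ?_
      rw [sum_stateMarginal_mul_meanTDError]
      ring
    · simp only [Jret, Finset.sum_range_one, pow_zero, one_mul, stateMarginal, mul_assoc,
        ← Finset.mul_sum]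
      ring
  rw [sum_dVisit_mul P ρ0 π hγ, td_tsum]

lemma one_sub_mul_Jret_sub_Jret (hγ : |γ| < 1) (π π' : S → PMF A) :
    (1 - γ) * (Jret P ρ0 γ π' R - Jret P ρ0 γ π R) =
      ∑ s, dVisit P ρ0 γ π s * (meanTDError P γ π' R f s - meanTDError P γ π R f s) +
        ∑ s, (dVisit P ρ0 γ π' s - dVisit P ρ0 γ π s) * meanTDError P γ π' R f s := by
  simp only [mul_sub, sub_mul, Finset.sum_sub_distrib,
    sum_dVisit_mul_meanTDError P ρ0 R f hγ]
  ring

lemma sum_importance_weight_sub_one_mul_eq {π π' : S → PMF A} {s : S}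
    (hac : ∀ a, π s a = 0 → π' s a = 0) (γ : ℝ) :
    ∑ a, (π s a).toReal * ∑ s', (P s a s').toReal *
        (((π' s a).toReal / (π s a).toReal - 1) * (R s a + γ * f s' - f s)) =
      meanTDError P γ π' R f s - meanTDError P γ π R f s := by
  have reweight (a : A) : (π s a).toReal * ((π' s a).toReal / (π s a).toReal - 1) =
      (π' s a).toReal - (π s a).toReal := by
    rw [mul_sub, mul_one, mul_div_cancel_of_imp']
    intro hπ
    rw [hac a (((ENNReal.toReal_eq_zero_iff _).mp hπ).resolve_right ((π s).apply_ne_top a)),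
      ENNReal.toReal_zero]
  simp only [meanTDError, ← Finset.sum_sub_distrib, ← sub_mul, ← reweight, mul_assoc,
    mul_left_comm (P _ _ _).toReal, ← Finset.mul_sum]

end TemporalDifference

theorem tace_appendix_lemma_three_upper_general
    {S A : Type*} [Fintype S] [Fintype A]
    (P : S → A → PMF S) (ρ0 : PMF S) (γ : ℝ) (hγ : |γ| < 1)
    (R : S → A → ℝ) (π π' : S → PMF A) (hac : ∀ s a, π s a = 0 → π' s a = 0)
    (f : S → ℝ) :
    let Tf : ℝ := ∑ s : S, dVisit P ρ0 γ π s * ∑ a : A, (π s a).toReal *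
        ∑ s' : S, (P s a s').toReal *
          (((π' s a).toReal / (π s a).toReal - 1) * (R s a + γ * f s' - f s))
    let εf : ℝ := ⨆ s : S, |meanTDError P γ π' R f s|
    let dTVd : ℝ := (1 / 2) * ∑ s : S, |dVisit P ρ0 γ π' s - dVisit P ρ0 γ π s|
    Jret P ρ0 γ π' R - Jret P ρ0 γ π R ≤ (1 / (1 - γ)) * (Tf + 2 * εf * dTVd) := by
  intro Tf εf dTVd
  have Tf_eq : Tf =
      ∑ s, dVisit P ρ0 γ π s * (meanTDError P γ π' R f s - meanTDError P γ π R f s) :=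
    Finset.sum_congr rfl fun s _ ↦ by rw [sum_importance_weight_sub_one_mul_eq P R f (hac s)]
  have visit_shift_le :
      ∑ s, (dVisit P ρ0 γ π' s - dVisit P ρ0 γ π s) * meanTDError P γ π' R f s ≤
        2 * εf * dTVd := by
    calc _ ≤ εf * ∑ s, |dVisit P ρ0 γ π' s - dVisit P ρ0 γ π s| :=
          sum_mul_le_iSup_abs_mul_sum_abs _ _
      _ = 2 * εf * dTVd := by ring
  have one_sub_pos : 0 < 1 - γ := sub_pos.mpr (lt_of_abs_lt hγ)
  rw [one_div, ← div_eq_inv_mul, le_div_iff₀' one_sub_pos,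
    one_sub_mul_Jret_sub_Jret P ρ0 R f hγ, Tf_eq]
  gcongr

/-- Appendix Lemma 3 (upper bound): `J_R(π') − J_R(π) ≤
(T_{π,f}(π') + 2 ε_f^{π'} D_TV(d^{π'}‖d^π)) / (1−γ)`. -/
theorem tace_appendix_lemma_three_upper
    {S A : Type*} [Fintype S] [Fintype A] [Nonempty S] [Nonempty A]
    (P : S → A → PMF S) (ρ0 : PMF S) (γ : ℝ) (hγ0 : 0 ≤ γ) (hγ1 : γ < 1)
    (R : S → A → ℝ) (π π' : S → PMF A) (hπpos : ∀ s a, 0 < (π s a).toReal)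
    (f : S → ℝ) :
    let Tf : ℝ := ∑ s : S, dVisit P ρ0 γ π s * ∑ a : A, (π s a).toReal *
        ∑ s' : S, (P s a s').toReal *
          (((π' s a).toReal / (π s a).toReal - 1) * (R s a + γ * f s' - f s))
    let εf : ℝ := ⨆ s : S,
      |∑ a : A, (π' s a).toReal * ∑ s' : S, (P s a s').toReal * (R s a + γ * f s' - f s)|
    let dTVd : ℝ := (1 / 2) * ∑ s : S, |dVisit P ρ0 γ π' s - dVisit P ρ0 γ π s|
    Jret P ρ0 γ π' R - Jret P ρ0 γ π R ≤ (1 / (1 - γ)) * (Tf + 2 * εf * dTVd) := by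
  exact tace_appendix_lemma_three_upper_general P ρ0 γ (abs_lt.mpr ⟨by linarith, hγ1⟩) R π π'
    (fun s a h ↦ absurd (hπpos s a) (by simp [h])) f
end
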